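/- arXiv:1910.13935 — 2 statements merged into one kernel-verified Lean document; each statement's English description precedes it below -/
import Mathlib

section
/- For every real number p with 2 < p < ∞, the Banach space ℓ^p of p-summable real sequences (with metric induced by the ℓ^p norm) does not admit a coarse embedding into the Hilbert space ℓ². That is, there do not exist a map f : ℓ^p → ℓ² and non-decreasing functions ρ₋, ρ₊ : [0,∞) → [0,∞) with ρ₋(t) → ∞ as t → ∞ such that ρ₋(‖x − y‖_p) ≤ ‖f(x) − f(y)‖₂ ≤ ρ₊(‖x − y‖_p) for all x, y ∈ ℓ^p. -/
open Filter
open scoped NNReal ENNReal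

/-- `f : X → Y` is a coarse embedding if there are non-decreasing functions
`ρ₋, ρ₊ : [0,∞) → [0,∞)` with `ρ₋(t) → ∞` as `t → ∞` such that
`ρ₋(d(x,y)) ≤ d'(f x, f y) ≤ ρ₊(d(x,y))` for all `x, y`. -/
def CoarseEmbedding {X Y : Type*} [MetricSpace X] [MetricSpace Y] (f : X → Y) : Prop :=
  ∃ ρminus ρplus : ℝ≥0 → ℝ≥0,
    Monotone ρminus ∧ Monotone ρplus ∧
    Tendsto ρminus atTop atTop ∧
    ∀ x y : X,
      ρminus (nndist x y) ≤ nndist (f x) (f y) ∧ nndist (f x) (f y) ≤ ρplus (nndist x y)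

/-!
A Hilbert-space valued map `g` on a finite abelian group `G` has a Fourier expansion, so the mean
square of `x ↦ g (x + a) - g x` is a nonnegative combination of the `‖ψ a - 1‖ ^ 2` over the
characters `ψ`, and quadratic inequalities for `g` reduce to inequalities for unit complex numbers.
This yields the inequality of metric cotype `2` of Mendel and Naor: if `a j` are `l ^ 2` elements
such that all the steps `∑ j, ± a j` change `g` by at most `R`, then some step `2 l a j` changes it,
at some point, by at most `3 R`.

The torus `(ℤ/4l)^(l²)` maps to `ℓ^p` so that the steps `∑ j, ± e j` have length at most `4` while
a step `2 l e j`, which sends a coordinate to its antipode, has length at least `l ^ (1 - 2 / p)`.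
For `2 < p` the latter is unbounded in `l`, which is incompatible with a coarse embedding of `ℓ^p`
into a Hilbert space.
-/

open scoped BigOperators ComplexConjugate

section Spectral

variable {G : Type*} [AddCommGroup G] [Fintype G]

theorem expect_norm_sum_mul_addChar_sq (c : AddChar G ℂ → ℂ) :
    𝔼 x, ‖∑ ψ, c ψ * ψ x‖ ^ 2 = ∑ ψ, ‖c ψ‖ ^ 2 := by
  have orthogonality (φ ψ : AddChar G ℂ) : 𝔼 x, conj (ψ x) * φ x = if φ = ψ then 1 else 0 := by
    simpa [RCLike.wInner_cWeight_eq_expect, mul_comm, eq_comm] using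
      AddChar.wInner_cWeight_eq_boole ψ φ
  apply Complex.ofReal_injective
  simp only [Complex.ofReal_expect, Complex.ofReal_sum, Complex.ofReal_pow]
  calc 𝔼 x, (‖∑ ψ, c ψ * ψ x‖ : ℂ) ^ 2
      = 𝔼 x, ∑ φ, ∑ ψ, c φ * conj (c ψ) * (conj (ψ x) * φ x) := by
        refine Finset.expect_congr rfl fun x _ ↦ ?_
        rw [← Complex.mul_conj', map_sum, Finset.sum_mul_sum]
        refine Finset.sum_congr rfl fun φ _ ↦ Finset.sum_congr rfl fun ψ _ ↦ ?_
        rw [map_mul]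
        ring
    _ = ∑ φ, ∑ ψ, c φ * conj (c ψ) * (if φ = ψ then 1 else 0) := by
        simp only [Finset.expect_sum_comm, ← Finset.mul_expect, orthogonality]
    _ = ∑ ψ, (‖c ψ‖ : ℂ) ^ 2 := by simp [Complex.mul_conj']

theorem exists_spectral_weights_complex (g : G → ℂ) :
    ∃ w : AddChar G ℂ → ℝ, (∀ ψ, 0 ≤ w ψ) ∧
      ∀ a, 𝔼 x, ‖g (x + a) - g x‖ ^ 2 = ∑ ψ, w ψ * ‖ψ a - 1‖ ^ 2 := by
  set c := (AddChar.complexBasis G).repr g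
  have fourier_inversion (x : G) : g x = ∑ ψ, c ψ * ψ x := by
    simpa using congrFun ((AddChar.complexBasis G).sum_repr g).symm x
  refine ⟨fun ψ ↦ ‖c ψ‖ ^ 2, fun ψ ↦ by positivity, fun a ↦ ?_⟩
  calc 𝔼 x, ‖g (x + a) - g x‖ ^ 2
      = 𝔼 x, ‖∑ ψ, c ψ * (ψ a - 1) * ψ x‖ ^ 2 := by
        refine Finset.expect_congr rfl fun x _ ↦ ?_
        simp only [fourier_inversion, ← Finset.sum_sub_distrib, AddChar.map_add_eq_mul]
        congr! 3
        ring
    _ = ∑ ψ, ‖c ψ‖ ^ 2 * ‖ψ a - 1‖ ^ 2 := by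
        simp only [expect_norm_sum_mul_addChar_sq fun ψ ↦ c ψ * (ψ a - 1), norm_mul, mul_pow]

variable {H : Type*} [NormedAddCommGroup H] [InnerProductSpace ℝ H]

theorem exists_spectral_weights (g : G → H) :
    ∃ w : AddChar G ℂ → ℝ, (∀ ψ, 0 ≤ w ψ) ∧
      ∀ a, 𝔼 x, ‖g (x + a) - g x‖ ^ 2 = ∑ ψ, w ψ * ‖ψ a - 1‖ ^ 2 := by
  let V := Submodule.span ℝ (Set.range g)
  let h (x : G) : V := ⟨g x, Submodule.subset_span ⟨x, rfl⟩⟩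
  have : FiniteDimensional ℝ V := FiniteDimensional.span_of_finite ℝ (Set.finite_range g)
  let b := stdOrthonormalBasis ℝ V
  choose w hw₀ hw using fun i ↦ exists_spectral_weights_complex fun x ↦ (inner ℝ (b i) (h x) : ℂ)
  refine ⟨fun ψ ↦ ∑ i, w i ψ, fun ψ ↦ Finset.sum_nonneg fun i _ ↦ hw₀ i ψ, fun a ↦ ?_⟩
  have parseval (x y : G) :
      ‖g y - g x‖ ^ 2 = ∑ i, ‖(inner ℝ (b i) (h y) : ℂ) - (inner ℝ (b i) (h x) : ℂ)‖ ^ 2 := by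
    rw [show ‖g y - g x‖ = ‖h y - h x‖ from rfl, ← b.sum_sq_norm_inner_right]
    simp only [inner_sub_right, ← Complex.ofReal_sub, Complex.norm_real]
  simp only [parseval, Finset.expect_sum_comm, hw, Finset.sum_mul]
  exact Finset.sum_comm

end Spectral

section Signs

variable {ι : Type*}

theorem min_one_sum_one_sub_sq_le {c : ι → ℝ} {s : Finset ι} (hc : ∀ j ∈ s, |c j| ≤ 1) :
    min 1 (∑ j ∈ s, (1 - c j ^ 2)) ≤ 4 * (1 - ∏ j ∈ s, c j) := by
  set P := ∏ j ∈ s, c j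
  set S := ∑ j ∈ s, (1 - c j ^ 2)
  have hS : 0 ≤ S := Finset.sum_nonneg fun j hj ↦ by
    linarith [(sq_le_one_iff_abs_le_one _).2 (hc j hj)]
  have hP : P ≤ 1 := by
    refine (le_abs_self P).trans ?_
    rw [Finset.abs_prod]
    exact Finset.prod_le_one (fun j _ ↦ abs_nonneg _) hc
  have sq_le_exp : P ^ 2 ≤ Real.exp (-S) := by
    rw [← Finset.prod_pow, ← Finset.sum_neg_distrib, Real.exp_sum]
    refine Finset.prod_le_prod (fun j _ ↦ sq_nonneg _) fun j _ ↦ ?_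
    linarith [Real.add_one_le_exp (-(1 - c j ^ 2))]
  have sq_mul_le : P ^ 2 * (1 + min 1 S) ≤ 1 :=
    calc P ^ 2 * (1 + min 1 S) ≤ Real.exp (-S) * Real.exp S := by
          gcongr
          linarith [min_le_right 1 S, Real.add_one_le_exp S]
      _ = 1 := by rw [← Real.exp_add, neg_add_cancel, Real.exp_zero]
  have hm₀ : 0 ≤ min 1 S := le_min zero_le_one hS
  have hm₁ : min 1 S ≤ 1 := min_le_left _ _
  have half_min_le : min 1 S / 2 ≤ 1 - P ^ 2 := by nlinarith
  nlinarith

theorem norm_pow_sub_one_le {R : Type*} [SeminormedRing R] [NormOneClass R] {z : R} (hz : ‖z‖ ≤ 1)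
    (n : ℕ) : ‖z ^ n - 1‖ ≤ n * ‖z - 1‖ := by
  rw [← geom_sum_mul]
  refine (norm_mul_le _ _).trans ?_
  gcongr
  calc ‖∑ i ∈ Finset.range n, z ^ i‖ ≤ ∑ i ∈ Finset.range n, ‖z ^ i‖ := norm_sum_le _ _
    _ ≤ ∑ i ∈ Finset.range n, 1 :=
        Finset.sum_le_sum fun i _ ↦ (norm_pow_le z i).trans (pow_le_one₀ (norm_nonneg z) hz)
    _ = n := by simp

theorem norm_sq_sub_one_sq {z : ℂ} (hz : ‖z‖ = 1) : ‖z ^ 2 - 1‖ ^ 2 = 4 * (1 - z.re ^ 2) := by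
  have im_sq : 1 - z.re ^ 2 = z.im ^ 2 := by rw [← Complex.sq_norm_sub_sq_re, hz, one_pow]
  have re_sq : (z ^ 2).re = z.re ^ 2 - z.im ^ 2 := by rw [pow_two, Complex.mul_re]; ring
  rw [Complex.norm_sub_one_sq_eq_of_norm_eq_one (by rw [norm_pow, hz, one_pow]), re_sq]
  linarith

-- The exponent must be even: when `z j = -1` for two indices and `z j = 1` for all others, the
-- right side vanishes.
theorem sum_norm_pow_two_mul_sub_one_sq_le [Fintype ι] {z : ι → ℂ} (hz : ∀ j, ‖z j‖ = 1) {l : ℕ}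
    (hl : Fintype.card ι ≤ l ^ 2) :
    ∑ j, ‖z j ^ (2 * l) - 1‖ ^ 2 ≤ 16 * l ^ 2 * (1 - ∏ j, (z j).re) := by
  have hzn (j : ι) : ‖z j ^ (2 * l)‖ = 1 := by rw [norm_pow, hz, one_pow]
  have le_card : ∑ j, ‖z j ^ (2 * l) - 1‖ ^ 2 ≤ 4 * l ^ 2 :=
    calc ∑ j, ‖z j ^ (2 * l) - 1‖ ^ 2 ≤ ∑ _j : ι, (4 : ℝ) := by
          gcongr with j
          nlinarith [norm_sub_le (z j ^ (2 * l)) 1, norm_nonneg (z j ^ (2 * l) - 1), hzn j,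
            norm_one (α := ℂ)]
      _ = 4 * Fintype.card ι := by simp [mul_comm]
      _ ≤ 4 * l ^ 2 := by gcongr; exact_mod_cast hl
  have le_sum : ∑ j, ‖z j ^ (2 * l) - 1‖ ^ 2 ≤ 4 * l ^ 2 * ∑ j, (1 - (z j).re ^ 2) := by
    rw [Finset.mul_sum]
    gcongr with j
    calc ‖z j ^ (2 * l) - 1‖ ^ 2 ≤ (l * ‖z j ^ 2 - 1‖) ^ 2 := by
          rw [pow_mul]
          gcongr
          exact norm_pow_sub_one_le (by rw [norm_pow, hz, one_pow]) l
      _ = 4 * l ^ 2 * (1 - (z j).re ^ 2) := by rw [mul_pow, norm_sq_sub_one_sq (hz j)]; ring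
  calc ∑ j, ‖z j ^ (2 * l) - 1‖ ^ 2
      ≤ 4 * l ^ 2 * min 1 (∑ j, (1 - (z j).re ^ 2)) := by
        rw [mul_min_of_nonneg _ _ (by positivity), mul_one]
        exact le_min le_card le_sum
    _ ≤ 4 * l ^ 2 * (4 * (1 - ∏ j, (z j).re)) := by
        gcongr
        exact min_one_sum_one_sub_sq_le fun j _ ↦ hz j ▸ Complex.abs_re_le_norm (z j)
    _ = 16 * l ^ 2 * (1 - ∏ j, (z j).re) := by ring

theorem addChar_sum_eq_prod {A M : Type*} [AddCommMonoid A] [CommMonoid M] (ψ : AddChar A M)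
    (s : Finset ι) (a : ι → A) : ψ (∑ j ∈ s, a j) = ∏ j ∈ s, ψ (a j) :=
  map_prod ψ.toMonoidHom (fun j ↦ Multiplicative.ofAdd (a j)) s

theorem expect_prod_units_int [Fintype ι] [DecidableEq ι] {K : Type*} [Field K] [CharZero K]
    (f : ι → ℤˣ → K) :
    𝔼 ε : ι → ℤˣ, ∏ j, f j (ε j) = ∏ j, (f j 1 + f j (-1)) / 2 := by
  rw [Fintype.expect_eq_sum_div_card, ← Fintype.prod_sum]
  simp [Finset.prod_div_distrib, UnitsInt.univ]

variable {G : Type*} [AddCommGroup G] [Finite G]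

theorem expect_norm_addChar_signed_sum_sub_one_sq [Fintype ι] [DecidableEq ι]
    (ψ : AddChar G ℂ) (a : ι → G) :
    𝔼 ε : ι → ℤˣ, ‖ψ (∑ j, ε j • a j) - 1‖ ^ 2 = 2 * (1 - ∏ j, (ψ (a j)).re) := by
  have expect_char : 𝔼 ε : ι → ℤˣ, ψ (∑ j, ε j • a j) = ((∏ j, (ψ (a j)).re : ℝ) : ℂ) := by
    simp only [addChar_sum_eq_prod, expect_prod_units_int fun j ε ↦ ψ (ε • a j)]
    simp [AddChar.map_neg_eq_conj, Complex.add_conj, Units.smul_def]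
  have expect_re : 𝔼 ε : ι → ℤˣ, (ψ (∑ j, ε j • a j)).re = ∏ j, (ψ (a j)).re := by
    have := congrArg Complex.re expect_char
    rwa [Complex.re_expect, Complex.ofReal_re] at this
  simp only [Complex.norm_sub_one_sq_eq_of_norm_eq_one (ψ.norm_apply _), ← Finset.mul_expect,
    Finset.expect_sub_distrib, expect_re, Fintype.expect_const]

end Signs

section Cotype

variable {G ι H : Type*} [AddCommGroup G] [Fintype ι] [NormedAddCommGroup H]
  [InnerProductSpace ℝ H]

theorem metric_cotype_two [Fintype G] [DecidableEq ι] (g : G → H) (a : ι → G) {l : ℕ}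
    (hl : Fintype.card ι ≤ l ^ 2) :
    ∑ j, 𝔼 x, ‖g (x + (2 * l) • a j) - g x‖ ^ 2
      ≤ 8 * l ^ 2 * 𝔼 ε : ι → ℤˣ, 𝔼 x, ‖g (x + ∑ j, ε j • a j) - g x‖ ^ 2 := by
  obtain ⟨w, hw₀, hw⟩ := exists_spectral_weights g
  calc ∑ j, 𝔼 x, ‖g (x + (2 * l) • a j) - g x‖ ^ 2
      = ∑ ψ, w ψ * ∑ j, ‖ψ (a j) ^ (2 * l) - 1‖ ^ 2 := by
        simp only [hw, AddChar.map_nsmul_eq_pow, Finset.mul_sum]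
        exact Finset.sum_comm
    _ ≤ ∑ ψ, w ψ * (8 * l ^ 2 * 𝔼 ε : ι → ℤˣ, ‖ψ (∑ j, ε j • a j) - 1‖ ^ 2) := by
        gcongr with ψ
        · exact hw₀ ψ
        · rw [expect_norm_addChar_signed_sum_sub_one_sq]
          linarith [sum_norm_pow_two_mul_sub_one_sq_le (fun j ↦ ψ.norm_apply (a j)) hl]
    _ = 8 * l ^ 2 * 𝔼 ε : ι → ℤˣ, 𝔼 x, ‖g (x + ∑ j, ε j • a j) - g x‖ ^ 2 := by
        simp only [hw, Finset.expect_sum_comm, Finset.mul_sum, ← Finset.mul_expect]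
        exact Finset.sum_congr rfl fun ψ _ ↦ by ring

theorem le_three_mul_of_norm_sub_le [Finite G] {g : G → H} {a : ι → G} {l : ℕ} [NeZero l]
    (hl : Fintype.card ι = l ^ 2) {r R : ℝ}
    (hr : ∀ x j, r ≤ ‖g (x + (2 * l) • a j) - g x‖)
    (hR : ∀ x, ∀ ε : ι → ℤˣ, ‖g (x + ∑ j, ε j • a j) - g x‖ ≤ R) : r ≤ 3 * R := by
  classical
  have := Fintype.ofFinite G
  have hR₀ : 0 ≤ R := (norm_nonneg _).trans (hR 0 1)
  by_contra! hlt
  have hr₀ : 0 ≤ r := by linarith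
  have sq_le : (l : ℝ) ^ 2 * r ^ 2 ≤ l ^ 2 * (8 * R ^ 2) :=
    calc (l : ℝ) ^ 2 * r ^ 2 = ∑ _j : ι, r ^ 2 := by simp [hl]
      _ ≤ ∑ j, 𝔼 x, ‖g (x + (2 * l) • a j) - g x‖ ^ 2 :=
          Finset.sum_le_sum fun j _ ↦ Finset.le_expect Finset.univ_nonempty fun x _ ↦
            pow_le_pow_left₀ hr₀ (hr x j) 2
      _ ≤ 8 * l ^ 2 * 𝔼 ε : ι → ℤˣ, 𝔼 x, ‖g (x + ∑ j, ε j • a j) - g x‖ ^ 2 :=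
          metric_cotype_two g a hl.le
      _ ≤ 8 * l ^ 2 * R ^ 2 := by
          gcongr
          exact Finset.expect_le Finset.univ_nonempty fun ε _ ↦
            Finset.expect_le Finset.univ_nonempty fun x _ ↦
              pow_le_pow_left₀ (norm_nonneg _) (hR x ε) 2
      _ = l ^ 2 * (8 * R ^ 2) := by ring
  have hl₀ : (0 : ℝ) < l ^ 2 := by have := NeZero.pos l; positivity
  nlinarith [le_of_mul_le_mul_left sq_le hl₀]

end Cotype

section Sequence

variable {ι κ : Type*} [Fintype κ] {p : ℝ≥0∞} [Fact (1 ≤ p)]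

theorem norm_lp_le_card_rpow_mul {E : ι → Type*} [∀ i, NormedAddCommGroup (E i)] {f : lp E p}
    {s : Finset ι} (hs : ∀ i ∉ s, f i = 0) {C : ℝ} (hC : 0 ≤ C) (hf : ∀ i, ‖f i‖ ≤ C) :
    ‖f‖ ≤ (s.card : ℝ) ^ p⁻¹.toReal * C := by
  rcases eq_or_ne p ∞ with rfl | hp
  · simpa using lp.norm_le_of_forall_le hC hf
  have hp₀ : 0 < p.toReal := ENNReal.toReal_pos (zero_lt_one.trans_le Fact.out).ne' hp
  refine lp.norm_le_of_tsum_le hp₀ (by positivity) ?_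
  calc ∑' i, ‖f i‖ ^ p.toReal = ∑ i ∈ s, ‖f i‖ ^ p.toReal :=
        tsum_eq_sum fun i hi ↦ by rw [hs i hi, norm_zero, Real.zero_rpow hp₀.ne']
    _ ≤ ∑ _i ∈ s, C ^ p.toReal := by gcongr with i; exact hf i
    _ = ((s.card : ℝ) ^ p⁻¹.toReal * C) ^ p.toReal := by
        rw [Real.mul_rpow (by positivity) hC, ENNReal.toReal_inv,
          Real.rpow_inv_rpow (by positivity) hp₀.ne', Finset.sum_const, nsmul_eq_mul]

variable [Infinite ι]

variable (ι κ p) in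
theorem exists_linearMap_pi_real_lp :
    ∃ T : (κ → ℝ) →ₗ[ℝ] lp (fun _ : ι ↦ ℝ) p,
      ∀ c, ‖c‖ ≤ ‖T c‖ ∧ ‖T c‖ ≤ (Fintype.card κ : ℝ) ^ p⁻¹.toReal * ‖c‖ := by
  let e : κ ↪ ι := (Fintype.equivFin κ).toEmbedding.trans
    (Fin.valEmbedding.trans (Infinite.natEmbedding ι))
  let extend : (κ → ℝ) →ₗ[ℝ] ι → ℝ := Function.ExtendByZero.linearMap ℝ e
  have extend_apply (c : κ → ℝ) (k : κ) : extend c (e k) = c k :=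
    e.injective.extend_apply c (0 : ι → ℝ) k
  have extend_eq_zero (c : κ → ℝ) (i : ι) (hi : i ∉ Finset.univ.map e) : extend c i = 0 :=
    Function.extend_apply' c (0 : ι → ℝ) i (by simpa using hi)
  have memℓp (c : κ → ℝ) : Memℓp (extend c) p :=
    (memℓp_zero <| (Finset.univ.map e).finite_toSet.subset fun i hi ↦
      not_imp_comm.1 (extend_eq_zero c i) hi).of_exponent_ge zero_le
  let T : (κ → ℝ) →ₗ[ℝ] lp (fun _ : ι ↦ ℝ) p :=
    { toFun := fun c ↦ ⟨extend c, memℓp c⟩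
      map_add' := fun c d ↦ Subtype.ext (map_add extend c d)
      map_smul' := fun r c ↦ Subtype.ext (map_smul extend r c) }
  refine ⟨T, fun c ↦ ⟨?_, ?_⟩⟩
  · refine (pi_norm_le_iff_of_nonneg (norm_nonneg _)).2 fun k ↦ ?_
    rw [← extend_apply c k]
    exact lp.norm_apply_le_norm (zero_lt_one.trans_le Fact.out).ne' (T c) (e k)
  · rw [← Finset.card_univ, ← Finset.card_map e]
    refine norm_lp_le_card_rpow_mul (extend_eq_zero c) (norm_nonneg c) fun i ↦ ?_
    by_cases hi : i ∈ Finset.univ.map e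
    · obtain ⟨k, -, rfl⟩ := Finset.mem_map.1 hi
      exact (congrArg norm (extend_apply c k)).trans_le (norm_le_pi_norm c k)
    · exact (congrArg norm (extend_eq_zero c i hi)).trans_le (by simp)

variable (ι κ p) in
theorem exists_linearMap_pi_complex_lp :
    ∃ T : (κ → ℂ) →ₗ[ℝ] lp (fun _ : ι ↦ ℝ) p,
      ∀ c, ‖c‖ ≤ 2 * ‖T c‖ ∧ ‖T c‖ ≤ (2 * Fintype.card κ : ℝ) ^ p⁻¹.toReal * ‖c‖ := by
  obtain ⟨T, hT⟩ := exists_linearMap_pi_real_lp ι (κ ⊕ κ) p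
  let reIm : (κ → ℂ) →ₗ[ℝ] κ ⊕ κ → ℝ :=
    { toFun := fun c ↦ Sum.elim (fun k ↦ (c k).re) fun k ↦ (c k).im
      map_add' := fun c d ↦ by ext (k | k) <;> simp
      map_smul' := fun r c ↦ by ext (k | k) <;> simp }
  have norm_reIm_le (c : κ → ℂ) : ‖reIm c‖ ≤ ‖c‖ := by
    refine (pi_norm_le_iff_of_nonneg (norm_nonneg c)).2 ?_
    rintro (k | k)
    · exact (Complex.abs_re_le_norm (c k)).trans (norm_le_pi_norm c k)
    · exact (Complex.abs_im_le_norm (c k)).trans (norm_le_pi_norm c k)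
  have norm_le_two_mul_norm_reIm (c : κ → ℂ) : ‖c‖ ≤ 2 * ‖reIm c‖ := by
    refine (pi_norm_le_iff_of_nonneg (by positivity)).2 fun k ↦ ?_
    have hre : |(c k).re| ≤ ‖reIm c‖ := norm_le_pi_norm (reIm c) (.inl k)
    have him : |(c k).im| ≤ ‖reIm c‖ := norm_le_pi_norm (reIm c) (.inr k)
    linarith [Complex.norm_le_abs_re_add_abs_im (c k)]
  refine ⟨T ∘ₗ reIm, fun c ↦ ⟨?_, ?_⟩⟩
  · exact (norm_le_two_mul_norm_reIm c).trans (by gcongr; exact (hT (reIm c)).1)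
  · calc ‖T (reIm c)‖ ≤ (Fintype.card (κ ⊕ κ) : ℝ) ^ p⁻¹.toReal * ‖reIm c‖ := (hT (reIm c)).2
      _ ≤ (2 * Fintype.card κ : ℝ) ^ p⁻¹.toReal * ‖c‖ := by
        rw [Fintype.card_sum, Nat.cast_add, ← two_mul]
        gcongr
        exact norm_reIm_le c

end Sequence

section Torus

theorem norm_stdAddChar_add_one_sub_le {n : ℕ} [NeZero n] (a : ZMod n) :
    ‖(ZMod.stdAddChar (a + 1) : ℂ) - ZMod.stdAddChar a‖ ≤ 2 * Real.pi / n := by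
  have exp_eq : (ZMod.stdAddChar (1 : ZMod n) : ℂ)
      = Complex.exp (Complex.I * ((2 * Real.pi / n : ℝ) : ℂ)) := by
    have := ZMod.stdAddChar_coe (N := n) 1
    push_cast at this ⊢
    rw [this]
    ring_nf
  calc ‖(ZMod.stdAddChar (a + 1) : ℂ) - ZMod.stdAddChar a‖
      = ‖(ZMod.stdAddChar (1 : ZMod n) : ℂ) - 1‖ := by
        rw [AddChar.map_add_eq_mul, ← mul_sub_one, norm_mul, AddChar.norm_apply, one_mul]
    _ ≤ ‖2 * Real.pi / n‖ := exp_eq ▸ Real.norm_exp_I_mul_ofReal_sub_one_le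
    _ = 2 * Real.pi / n := Real.norm_of_nonneg (by positivity)

theorem norm_stdAddChar_add_unit_sub_le {n : ℕ} [NeZero n] (a : ZMod n) (ε : ℤˣ) :
    ‖(ZMod.stdAddChar (a + ε • (1 : ZMod n)) : ℂ) - ZMod.stdAddChar a‖ ≤ 2 * Real.pi / n := by
  rcases Int.units_eq_one_or ε with rfl | rfl
  · rw [one_smul]
    exact norm_stdAddChar_add_one_sub_le a
  · rw [Units.neg_smul, one_smul]
    have := norm_stdAddChar_add_one_sub_le (a + -1)
    rwa [neg_add_cancel_right, norm_sub_rev] at this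

theorem stdAddChar_add_half {n : ℕ} [NeZero n] (a : ZMod (2 * n)) :
    (ZMod.stdAddChar (a + (n : ZMod (2 * n))) : ℂ) = -ZMod.stdAddChar a := by
  have half : (ZMod.stdAddChar (n : ZMod (2 * n)) : ℂ) = -1 := by
    have hn : (n : ℂ) ≠ 0 := NeZero.ne _
    rw [← Int.cast_natCast, ZMod.stdAddChar_coe, ← Complex.exp_pi_mul_I]
    congr 1
    push_cast
    field_simp
  rw [AddChar.map_add_eq_mul, half, mul_neg_one]

/-- The discrete torus `(ℤ/n)^κ` as a subset of `ℂ^κ` with the sup norm: each coordinate is sent to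
the corresponding `n`-th root of unity. -/
noncomputable def discreteTorus {n : ℕ} [NeZero n] {κ : Type*} (x : κ → ZMod n) (k : κ) : ℂ :=
  ZMod.stdAddChar (x k)

variable {κ : Type*} [Fintype κ] [DecidableEq κ]

theorem two_le_norm_discreteTorus_add_half_sub {n : ℕ} [NeZero n] (x : κ → ZMod (2 * n)) (k : κ) :
    2 ≤ ‖discreteTorus (x + n • Pi.single k 1) - discreteTorus x‖ := by
  have antipodal : discreteTorus (x + n • Pi.single k 1) k = -discreteTorus x k := by
    simpa [discreteTorus] using stdAddChar_add_half (x k)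
  calc (2 : ℝ) = ‖-discreteTorus x k - discreteTorus x k‖ := by
        rw [← neg_add', norm_neg, ← two_mul, norm_mul, discreteTorus, AddChar.norm_apply]
        norm_num
    _ ≤ ‖discreteTorus (x + n • Pi.single k 1) - discreteTorus x‖ :=
        antipodal ▸ norm_le_pi_norm (discreteTorus (x + n • Pi.single k 1) - discreteTorus x) k

theorem norm_discreteTorus_add_signed_sum_sub_le {n : ℕ} [NeZero n] (x : κ → ZMod n)
    (ε : κ → ℤˣ) :
    ‖discreteTorus (x + ∑ k, ε k • Pi.single k 1) - discreteTorus x‖ ≤ 2 * Real.pi / n := by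
  refine (pi_norm_le_iff_of_nonneg (by positivity)).2 fun k ↦ ?_
  have coordinate : (∑ i, ε i • (Pi.single i 1 : κ → ZMod n)) k = ε k • (1 : ZMod n) := by
    simp [Finset.sum_apply, Pi.single_apply, Units.smul_def]
  rw [Pi.sub_apply, discreteTorus, Pi.add_apply, coordinate]
  exact norm_stdAddChar_add_unit_sub_le (x k) (ε k)

variable (ι : Type*) [Infinite ι] (p : ℝ≥0∞) [Fact (1 ≤ p)]

theorem exists_torus_map_lp (l : ℕ) [NeZero l] :
    ∃ F : (Fin (l ^ 2) → ZMod (2 * (2 * l))) → lp (fun _ : ι ↦ ℝ) p,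
      (∀ x j, (l : ℝ) ^ (1 - 2 * p⁻¹.toReal) ≤ ‖F (x + (2 * l) • Pi.single j 1) - F x‖) ∧
      ∀ x, ∀ ε : Fin (l ^ 2) → ℤˣ, ‖F (x + ∑ j, ε j • Pi.single j 1) - F x‖ ≤ 4 := by
  have hl : (0 : ℝ) < l := Nat.cast_pos.2 (NeZero.pos l)
  obtain ⟨T, hT⟩ := exists_linearMap_pi_complex_lp ι (Fin (l ^ 2)) p
  have hq : p⁻¹.toReal ≤ 1 :=
    ENNReal.toReal_le_of_le_ofReal zero_le_one
      (by rw [ENNReal.ofReal_one]; exact ENNReal.inv_le_one.2 Fact.out)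
  generalize p⁻¹.toReal = q at hT hq ⊢
  set s := (l : ℝ) ^ (1 - 2 * q)
  have hs : 0 ≤ s := by positivity
  have scale : (l ^ 2 : ℝ) ^ q * s = l := by
    rw [← Real.rpow_natCast, ← Real.rpow_mul hl.le, ← Real.rpow_add hl]
    simp
  have norm_sub (c d : Fin (l ^ 2) → ℂ) : ‖T (s • c) - T (s • d)‖ = s * ‖T (c - d)‖ := by
    rw [← map_sub, ← smul_sub, map_smul, norm_smul, Real.norm_of_nonneg hs]
  refine ⟨fun x ↦ T (s • discreteTorus x), fun x j ↦ ?_, fun x ε ↦ ?_⟩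
  · rw [norm_sub]
    refine le_mul_of_one_le_right hs ?_
    linarith [two_le_norm_discreteTorus_add_half_sub x j,
      (hT (discreteTorus (x + (2 * l) • Pi.single j 1) - discreteTorus x)).1]
  · set u := discreteTorus (x + ∑ j, ε j • Pi.single j 1) - discreteTorus x
    have norm_u_le : ‖u‖ ≤ 2 / l := by
      refine (norm_discreteTorus_add_signed_sum_sub_le x ε).trans ?_
      push_cast
      rw [div_le_div_iff₀ (by positivity) hl]
      nlinarith [Real.pi_le_four]
    calc ‖T (s • discreteTorus (x + ∑ j, ε j • Pi.single j 1)) - T (s • discreteTorus x)‖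
        = s * ‖T u‖ := norm_sub _ _
      _ ≤ s * ((2 * l ^ 2 : ℝ) ^ q * (2 / l)) := by
          gcongr
          refine (hT u).2.trans ?_
          rw [Fintype.card_fin, Nat.cast_pow]
          gcongr
      _ = (l ^ 2 : ℝ) ^ q * s * (2 / l) * 2 ^ q := by
          rw [Real.mul_rpow zero_le_two (by positivity)]
          ring
      _ = 2 * 2 ^ q := by rw [scale]; field_simp
      _ ≤ 2 * 2 ^ (1 : ℝ) := by gcongr; exact one_le_two
      _ = 4 := by norm_num

end Torus

section Compression

variable {ι H : Type*} [Infinite ι] [NormedAddCommGroup H] [InnerProductSpace ℝ H] {p : ℝ≥0∞}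
  [Fact (1 ≤ p)]

theorem compression_rpow_le_three_mul {f : lp (fun _ : ι ↦ ℝ) p → H} {ρminus ρplus : ℝ≥0 → ℝ≥0}
    (hminus : Monotone ρminus) (hplus : Monotone ρplus)
    (hf : ∀ x y, ρminus (nndist x y) ≤ nndist (f x) (f y) ∧
      nndist (f x) (f y) ≤ ρplus (nndist x y)) (l : ℕ) [NeZero l] :
    ρminus ((l : ℝ) ^ (1 - 2 * p⁻¹.toReal)).toNNReal ≤ 3 * ρplus 4 := by
  obtain ⟨F, far, near⟩ := exists_torus_map_lp ι p l
  rw [← NNReal.coe_le_coe, NNReal.coe_mul, NNReal.coe_ofNat]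
  refine le_three_mul_of_norm_sub_le (g := f ∘ F) (a := fun j ↦ Pi.single j 1)
    (Fintype.card_fin _) (fun x j ↦ ?_) fun x ε ↦ ?_
  · rw [← dist_eq_norm, ← coe_nndist, NNReal.coe_le_coe]
    refine (hminus (Real.toNNReal_le_iff_le_coe.2 ?_)).trans (hf _ _).1
    rw [coe_nndist, dist_eq_norm]
    exact far x j
  · rw [← dist_eq_norm, ← coe_nndist, NNReal.coe_le_coe]
    refine (hf _ _).2.trans (hplus ?_)
    rw [← NNReal.coe_le_coe, coe_nndist, dist_eq_norm]
    exact near x ε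

theorem lp_no_coarse_embedding_into_l2_general (hp : 2 < p) :
    ¬ ∃ f : lp (fun _ : ι ↦ ℝ) p → H, CoarseEmbedding f := by
  rintro ⟨f, ρminus, ρplus, hminus, hplus, htend, hf⟩
  have exponent_pos : 0 < 1 - 2 * p⁻¹.toReal := by
    have : p⁻¹.toReal < (2⁻¹ : ℝ≥0∞).toReal :=
      (ENNReal.toReal_lt_toReal (ENNReal.inv_ne_top.2 (zero_lt_two.trans hp).ne')
        (ENNReal.inv_ne_top.2 two_ne_zero)).2 (ENNReal.inv_lt_inv.2 hp)
    rw [ENNReal.toReal_inv 2, ENNReal.toReal_ofNat] at this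
    linarith
  have unbounded : Tendsto (fun l : ℕ ↦ ρminus ((l : ℝ) ^ (1 - 2 * p⁻¹.toReal)).toNNReal)
      atTop atTop :=
    htend.comp <| Real.tendsto_toNNReal_atTop.comp <|
      (tendsto_rpow_atTop exponent_pos).comp tendsto_natCast_atTop_atTop
  obtain ⟨l, hlt, hl⟩ :=
    ((unbounded.eventually_gt_atTop (3 * ρplus 4)).and (eventually_ne_atTop 0)).exists
  have : NeZero l := ⟨hl⟩
  exact hlt.not_ge (compression_rpow_le_three_mul hminus hplus hf l)

end Compression

/-- Randrianarivony's corollary: for `2 < p < ∞`, the space `ℓ^p` of `p`-summable real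
sequences does not coarsely embed into the Hilbert space `ℓ²`. -/
theorem lp_no_coarse_embedding_into_l2 (p : ℝ) (hp : 2 < p) :
    haveI : Fact (1 ≤ ENNReal.ofReal p) := ⟨ENNReal.one_le_ofReal.mpr (by linarith)⟩
    ¬ ∃ f : lp (fun _ : ℕ => ℝ) (ENNReal.ofReal p) → lp (fun _ : ℕ => ℝ) 2,
      CoarseEmbedding f := by
  have : Fact (1 ≤ ENNReal.ofReal p) := ⟨ENNReal.one_le_ofReal.mpr (by linarith)⟩
  exact lp_no_coarse_embedding_into_l2_general
    (ENNReal.ofReal_ofNat 2 ▸ (ENNReal.ofReal_lt_ofReal_iff (by linarith)).2 hp)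
end

section
/- Let p be a real number with 2 < p < ∞. There do not exist non-decreasing functions ρ₋, ρ₊ : [0,∞) → [0,∞) with ρ₋(t) → ∞ as t → ∞ such that for every natural number d and every finite subset A of ℝ^d equipped with the ℓ^p norm, there is a map f_A : A → ℓ² satisfying ρ₋(‖x − y‖_p) ≤ ‖f_A(x) − f_A(y)‖₂ ≤ ρ₊(‖x − y‖_p) for all x, y ∈ A. -/
open Filter
open scoped NNReal ENNReal

/-!
Hilbert space satisfies a metric cotype inequality: if commuting linear isometries `T_j`
(`j = 1, …, n`) move `v` by at most `K` along every product over a subset of the indices, while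
every `T_j ^ k` moves it by at least `L`, then `n (L - 2K)² ≤ 4 k² K²`. To see this, apply the
operators `(1 + T_j) / 2` to `v` one after the other. By the parallelogram law the `j`-th one lowers
the squared norm by a quarter of the squared displacement under `T_j` of the current average, which
is at least `((L - 2K) / k)²`, whereas the total loss is at most `K²`. Functions on a finite abelian
group fall under this inequality through the regular representation.

In the torus of `2m`-th roots of unity with `m²` factors, rescaled by a factor `r` inside
`ℓ^p(ℂ^{m²})`, generators and their products over subsets move points by `O(r m^{2/p - 1})`, whereas
`m`-th powers of generators are antipodal in one factor and move points by at least a constant times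
`r`. For `p > 2` the first quantity can be kept bounded while `r → ∞`; the cotype inequality with
`n = m²` and `k = m` then fails for a uniform embedding.
-/

open scoped Topology

section LinearIsometry

variable {R E : Type*} [Semiring R] [SeminormedAddCommGroup E] [Module R E]

theorem norm_linearIsometry_pow_sub_le (T : E →ₗᵢ[R] E) (v : E) (k : ℕ) :
    ‖(T ^ k) v - v‖ ≤ k * ‖T v - v‖ := by
  induction k with
  | zero => simp
  | succ k ih =>
    have hstep : ‖(T ^ (k + 1)) v - (T ^ k) v‖ = ‖T v - v‖ := by
      rw [pow_succ, LinearIsometry.coe_mul, Function.comp_apply, ← map_sub, LinearIsometry.norm_map]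
    calc ‖(T ^ (k + 1)) v - v‖
        ≤ ‖(T ^ (k + 1)) v - (T ^ k) v‖ + ‖(T ^ k) v - v‖ := norm_sub_le_norm_sub_add_norm_sub ..
      _ ≤ ‖T v - v‖ + k * ‖T v - v‖ := by rw [hstep]; gcongr
      _ = (k + 1 : ℕ) * ‖T v - v‖ := by push_cast; ring

theorem norm_linearIsometry_sub_le_add (T : E →ₗᵢ[R] E) (v w : E) :
    ‖T v - v‖ ≤ ‖T w - w‖ + 2 * ‖w - v‖ := by
  have h := dist_triangle4 (T v) (T w) w v
  rw [T.dist_map, dist_comm v w] at h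
  simp only [dist_eq_norm] at h
  linarith

end LinearIsometry

section CubeAverage

variable {M ι V : Type*} [CommMonoid M] [SeminormedAddCommGroup V] [NormedSpace ℝ V]

/-- The average of `π (∏ i ∈ t, e i) v` over the subsets `t` of `s`, that is, the result of applying
to `v` the commuting averaging operators `(1 + π (e i)) / 2` with `i ∈ s`. The abelian family of
isometries is encoded as an action `π` of a commutative monoid. -/
noncomputable def cubeAverage (π : M →* (V →ₗᵢ[ℝ] V)) (e : ι → M) (s : Finset ι) (v : V) : V :=
  ∑ t ∈ s.powerset, ((2 : ℝ) ^ s.card)⁻¹ • π (∏ i ∈ t, e i) v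

variable {π : M →* (V →ₗᵢ[ℝ] V)} {e : ι → M} {s : Finset ι} {v : V}

theorem cubeAverage_empty : cubeAverage π e ∅ v = v := by
  simp [cubeAverage]

theorem cubeAverage_insert [DecidableEq ι] {j : ι} (hj : j ∉ s) :
    cubeAverage π e (insert j s) v =
      midpoint ℝ (cubeAverage π e s v) (π (e j) (cubeAverage π e s v)) := by
  have hprod : ∀ t ∈ s.powerset,
      π (∏ i ∈ insert j t, e i) v = π (e j) (π (∏ i ∈ t, e i) v) := fun t ht ↦ by
    rw [Finset.prod_insert fun h ↦ hj (Finset.mem_powerset.mp ht h), map_mul,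
      LinearIsometry.coe_mul, Function.comp_apply]
  simp only [cubeAverage, ← Finset.smul_sum]
  rw [Finset.sum_powerset_insert hj, Finset.card_insert_of_notMem hj, Finset.sum_congr rfl hprod,
    ← map_sum, map_smul, midpoint_eq_smul_add, ← smul_add, smul_smul, pow_succ', mul_inv,
    invOf_eq_inv]

theorem cubeAverage_mem_of_convex {S : Set V} (hS : Convex ℝ S)
    (h : ∀ t ⊆ s, π (∏ i ∈ t, e i) v ∈ S) : cubeAverage π e s v ∈ S :=
  hS.sum_mem (fun _ _ ↦ by positivity) (by simp) fun t ht ↦ h t (Finset.mem_powerset.mp ht)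

theorem norm_cubeAverage_sub_le {K : ℝ} (hK : ∀ t ⊆ s, ‖π (∏ i ∈ t, e i) v - v‖ ≤ K) :
    ‖cubeAverage π e s v - v‖ ≤ K :=
  mem_closedBall_iff_norm.mp <| cubeAverage_mem_of_convex (convex_closedBall v K)
    fun t ht ↦ mem_closedBall_iff_norm.mpr (hK t ht)

end CubeAverage

section MetricCotype

variable {M ι V : Type*} [CommMonoid M] [SeminormedAddCommGroup V] [InnerProductSpace ℝ V]
  {π : M →* (V →ₗᵢ[ℝ] V)} {e : ι → M} {s : Finset ι} {v : V}

theorem norm_midpoint_sq_of_norm_eq {w : V} (h : ‖v‖ = ‖w‖) :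
    ‖midpoint ℝ v w‖ ^ 2 = ‖v‖ ^ 2 - ‖w - v‖ ^ 2 / 4 := by
  have hpar := parallelogram_law_with_norm ℝ w v
  have hmid : ‖midpoint ℝ v w‖ = ‖w + v‖ / 2 := by
    rw [midpoint_eq_smul_add, norm_smul, invOf_eq_inv, norm_inv, Real.norm_ofNat, add_comm v w,
      inv_mul_eq_div]
  rw [hmid, div_pow]
  rw [h] at hpar ⊢
  linarith

theorem norm_sq_le_norm_cubeAverage_sq_add {K : ℝ}
    (hK : ∀ t ⊆ s, ‖π (∏ i ∈ t, e i) v - v‖ ≤ K) :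
    ‖v‖ ^ 2 ≤ ‖cubeAverage π e s v‖ ^ 2 + K ^ 2 := by
  have hinner : ‖v‖ ^ 2 - K ^ 2 / 2 ≤ inner ℝ v (cubeAverage π e s v) := by
    refine cubeAverage_mem_of_convex
      (convex_halfSpace_ge (innerₗ V v).isLinear (‖v‖ ^ 2 - K ^ 2 / 2)) fun t ht ↦ ?_
    have hsq := pow_le_pow_left₀ (norm_nonneg _) (hK t ht) 2
    rw [norm_sub_sq_real, LinearIsometry.norm_map, real_inner_comm] at hsq
    simp only [innerₗ_apply_apply, Set.mem_ofPred_eq]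
    linarith
  have hsub := norm_sub_sq_real v (cubeAverage π e s v)
  linarith [sq_nonneg ‖v - cubeAverage π e s v‖]

theorem card_mul_sq_add_norm_cubeAverage_sq_le {K L : ℝ} {k : ℕ} (hKL : 2 * K ≤ L)
    (hK : ∀ t ⊆ s, ‖π (∏ i ∈ t, e i) v - v‖ ≤ K)
    (hL : ∀ j ∈ s, L ≤ ‖π (e j ^ k) v - v‖) :
    s.card * (L - 2 * K) ^ 2 + 4 * k ^ 2 * ‖cubeAverage π e s v‖ ^ 2 ≤ 4 * k ^ 2 * ‖v‖ ^ 2 := by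
  classical
  induction s using Finset.induction_on with
  | empty => simp [cubeAverage_empty]
  | insert j s hj ih =>
    set w := cubeAverage π e s v
    have hKs : ∀ t ⊆ s, ‖π (∏ i ∈ t, e i) v - v‖ ≤ K :=
      fun t ht ↦ hK t (ht.trans (Finset.subset_insert j s))
    have hstep : L - 2 * K ≤ k * ‖π (e j) w - w‖ := by
      have hw : ‖w - v‖ ≤ K := norm_cubeAverage_sub_le hKs
      have hfar := norm_linearIsometry_sub_le_add (π (e j ^ k)) v w
      have hpow := norm_linearIsometry_pow_sub_le (π (e j)) w k
      rw [← map_pow] at hpow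
      linarith [hL j (Finset.mem_insert_self j s)]
    have hsq : (L - 2 * K) ^ 2 ≤ k ^ 2 * ‖π (e j) w - w‖ ^ 2 := by
      rw [← mul_pow]
      exact pow_le_pow_left₀ (sub_nonneg.mpr hKL) hstep 2
    have hdrop : ‖cubeAverage π e (insert j s) v‖ ^ 2 = ‖w‖ ^ 2 - ‖π (e j) w - w‖ ^ 2 / 4 := by
      rw [cubeAverage_insert hj, norm_midpoint_sq_of_norm_eq (LinearIsometry.norm_map _ _).symm]
    have hind := ih hKs fun i hi ↦ hL i (Finset.mem_insert_of_mem hi)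
    rw [hdrop, Finset.card_insert_of_notMem hj]
    push_cast
    linarith

theorem card_mul_sq_le_of_isometry_displacement {K L : ℝ} {k : ℕ} (hKL : 2 * K ≤ L)
    (hK : ∀ t ⊆ s, ‖π (∏ i ∈ t, e i) v - v‖ ≤ K)
    (hL : ∀ j ∈ s, L ≤ ‖π (e j ^ k) v - v‖) :
    s.card * (L - 2 * K) ^ 2 ≤ 4 * k ^ 2 * K ^ 2 := by
  have hgain := card_mul_sq_add_norm_cubeAverage_sq_le hKL hK hL
  have hloss : 4 * (k : ℝ) ^ 2 * ‖v‖ ^ 2 ≤ 4 * k ^ 2 * (‖cubeAverage π e s v‖ ^ 2 + K ^ 2) := by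
    gcongr
    exact norm_sq_le_norm_cubeAverage_sq_add hK
  linarith

end MetricCotype

section FiniteGroup

variable (G H : Type*) [Group G] [Fintype G] [SeminormedAddCommGroup H] [NormedSpace ℝ H]

/-- The right regular representation of a finite group `G` on `ℓ²(G; H)`: the element `a` sends `u`
to `x ↦ u (x * a)`. -/
noncomputable def rightRegularRep :
    G →* (PiLp 2 (fun _ : G ↦ H) →ₗᵢ[ℝ] PiLp 2 (fun _ : G ↦ H)) where
  toFun a := (LinearIsometryEquiv.piLpCongrLeft 2 ℝ H (Equiv.mulRight a⁻¹)).toLinearIsometry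
  map_one' := by
    ext u x
    change u (x * 1⁻¹⁻¹) = u x
    simp only [inv_one, mul_one]
  map_mul' a b := by
    ext u x
    change u (x * (a * b)⁻¹⁻¹) = u (x * a⁻¹⁻¹ * b⁻¹⁻¹)
    simp only [inv_inv, mul_assoc]

variable {G H}

theorem rightRegularRep_apply (a : G) (u : PiLp 2 (fun _ : G ↦ H)) (x : G) :
    rightRegularRep G H a u x = u (x * a) := by
  simp [rightRegularRep]

theorem norm_rightRegularRep_toLp_sub_sq (a : G) (g : G → H) :
    ‖rightRegularRep G H a (WithLp.toLp 2 g) - WithLp.toLp 2 g‖ ^ 2 =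
      ∑ x, ‖g (x * a) - g x‖ ^ 2 := by
  simp only [PiLp.norm_sq_eq_of_L2, PiLp.sub_apply, rightRegularRep_apply]

end FiniteGroup

theorem card_mul_sq_le_of_displacement {ι G H : Type*} [CommGroup G] [Finite G]
    [NormedAddCommGroup H] [InnerProductSpace ℝ H] {e : ι → G} {g : G → H} {s : Finset ι}
    {K L : ℝ} {k : ℕ} (hKL : 2 * K ≤ L)
    (hK : ∀ x, ∀ t ⊆ s, ‖g (x * ∏ i ∈ t, e i) - g x‖ ≤ K)
    (hL : ∀ x, ∀ j ∈ s, L ≤ ‖g (x * e j ^ k) - g x‖) :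
    s.card * (L - 2 * K) ^ 2 ≤ 4 * k ^ 2 * K ^ 2 := by
  have := Fintype.ofFinite G
  obtain ⟨c, hc0, hc⟩ : ∃ c : ℝ, 0 < c ∧ c ^ 2 = Fintype.card G :=
    ⟨√(Fintype.card G), by positivity, Real.sq_sqrt (Nat.cast_nonneg _)⟩
  have hK0 : 0 ≤ K := (norm_nonneg _).trans (hK 1 ∅ (Finset.empty_subset s))
  have hupper : ∀ t ⊆ s,
      ‖rightRegularRep G H (∏ i ∈ t, e i) (WithLp.toLp 2 g) - WithLp.toLp 2 g‖ ≤ c * K :=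
    fun t ht ↦ by
    refine (sq_le_sq₀ (norm_nonneg _) (by positivity)).mp ?_
    rw [norm_rightRegularRep_toLp_sub_sq, mul_pow, hc, ← nsmul_eq_mul]
    exact Finset.sum_le_card_nsmul _ _ _ fun x _ ↦
      pow_le_pow_left₀ (norm_nonneg _) (hK x t ht) 2
  have hlower : ∀ j ∈ s,
      c * L ≤ ‖rightRegularRep G H (e j ^ k) (WithLp.toLp 2 g) - WithLp.toLp 2 g‖ :=
    fun j hj ↦ by
    refine (sq_le_sq₀ (mul_nonneg hc0.le (by linarith)) (norm_nonneg _)).mp ?_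
    rw [norm_rightRegularRep_toLp_sub_sq, mul_pow, hc, ← nsmul_eq_mul]
    exact Finset.card_nsmul_le_sum _ _ _ fun x _ ↦
      pow_le_pow_left₀ (by linarith) (hL x j hj) 2
  have hcotype := card_mul_sq_le_of_isometry_displacement (K := c * K) (L := c * L)
    (by nlinarith) hupper hlower
  refine le_of_mul_le_mul_left ?_ (sq_pos_of_pos hc0)
  linarith

section Realification

variable (p : ℝ≥0∞) (n : ℕ)

/-- The real and imaginary parts of a vector of `ℂ^n`, as a vector of `ℝ^{2n}` with the `ℓ^p` norm.
The coordinates of `z j` sit at the two indices that `finProdFinEquiv` attaches to `j`. -/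
noncomputable def realCoordinates :
    (Fin n → ℂ) →ₗ[ℝ] PiLp p (fun _ : Fin (n * 2) ↦ ℝ) :=
  (WithLp.linearEquiv p ℝ (Fin (n * 2) → ℝ)).symm.toLinearMap ∘ₗ LinearMap.pi fun i ↦
    Complex.basisOneI.coord (finProdFinEquiv.symm i).2 ∘ₗ
      LinearMap.proj (finProdFinEquiv.symm i).1

variable {n}

theorem realCoordinates_apply (z : Fin n → ℂ) (j : Fin n) (b : Fin 2) :
    realCoordinates p n z (finProdFinEquiv (j, b)) = ![(z j).re, (z j).im] b := by
  change Complex.basisOneI.repr (z (finProdFinEquiv.symm (finProdFinEquiv (j, b))).1)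
    (finProdFinEquiv.symm (finProdFinEquiv (j, b))).2 = _
  rw [Equiv.symm_apply_apply, Complex.coe_basisOneI_repr]

variable [Fact (1 ≤ p)]

theorem norm_realCoordinates_le (z : Fin n → ℂ) :
    ‖realCoordinates p n z‖ ≤ (n * 2 : ℝ) ^ p.toReal⁻¹ * ‖z‖ := by
  have hcoord : ‖(realCoordinates p n z).ofLp‖ ≤ ‖z‖ := by
    refine (pi_norm_le_iff_of_nonneg (norm_nonneg z)).mpr fun i ↦ ?_
    obtain ⟨⟨j, b⟩, rfl⟩ := finProdFinEquiv.surjective i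
    rw [realCoordinates_apply]
    refine le_trans ?_ (norm_le_pi_norm z j)
    fin_cases b
    · exact Complex.abs_re_le_norm (z j)
    · exact Complex.abs_im_le_norm (z j)
  have hlip := (PiLp.lipschitzWith_toLp p fun _ : Fin (n * 2) ↦ ℝ).norm_le_mul rfl
    (realCoordinates p n z).ofLp
  simp only [WithLp.toLp_ofLp, Fintype.card_fin, Nat.cast_mul, Nat.cast_ofNat, one_div,
    ENNReal.toReal_inv, NNReal.coe_rpow, NNReal.coe_mul, NNReal.coe_natCast, NNReal.coe_ofNat]
    at hlip
  exact hlip.trans (by gcongr)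

theorem norm_le_two_mul_norm_realCoordinates (z : Fin n → ℂ) :
    ‖z‖ ≤ 2 * ‖realCoordinates p n z‖ := by
  refine (pi_norm_le_iff_of_nonneg (by positivity)).mpr fun j ↦ ?_
  have hre := PiLp.norm_apply_le (realCoordinates p n z) (finProdFinEquiv (j, 0))
  have him := PiLp.norm_apply_le (realCoordinates p n z) (finProdFinEquiv (j, 1))
  rw [realCoordinates_apply] at hre him
  calc ‖z j‖ ≤ |(z j).re| + |(z j).im| := Complex.norm_le_abs_re_add_abs_im (z j)
    _ ≤ ‖realCoordinates p n z‖ + ‖realCoordinates p n z‖ := add_le_add hre him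
    _ = 2 * ‖realCoordinates p n z‖ := (two_mul _).symm

end Realification

section Torus

theorem exists_rootsOfUnity_norm_sub_one_le {m : ℕ} (hm : 0 < m) :
    ∃ ζ : rootsOfUnity (2 * m) ℂ,
      ‖((ζ : ℂˣ) : ℂ) - 1‖ ≤ Real.pi / m ∧ ((ζ : ℂˣ) : ℂ) ^ m = -1 := by
  have hm' : (m : ℂ) ≠ 0 := by exact_mod_cast hm.ne'
  have : NeZero (2 * m) := ⟨by positivity⟩
  set z := Complex.exp (Complex.I * (Real.pi / m : ℝ))
  have hpow : z ^ m = -1 := by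
    rw [← Complex.exp_nat_mul, ← Complex.exp_pi_mul_I]
    push_cast
    congr 1
    field_simp
  refine ⟨rootsOfUnity.mkOfPowEq z (by rw [mul_comm, pow_mul, hpow, neg_one_sq]), ?_, ?_⟩
  · rw [rootsOfUnity.coe_mkOfPowEq]
    refine Real.norm_exp_I_mul_ofReal_sub_one_le.trans (Real.norm_of_nonneg ?_).le
    positivity
  · rw [rootsOfUnity.coe_mkOfPowEq, hpow]

variable {ι : Type*} {N : ℕ}

/-- The embedding into `ℂ^ι` of the discrete torus, the power of the group of `N`-th roots of unity
indexed by `ι`. -/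
def torusCoord (x : ι → rootsOfUnity N ℂ) : ι → ℂ := fun j ↦ ((x j : ℂˣ) : ℂ)

variable [NeZero N]

theorem norm_torusCoord_mul_sub_apply (x y : ι → rootsOfUnity N ℂ) (j : ι) :
    ‖(torusCoord (x * y) - torusCoord x) j‖ = ‖((y j : ℂˣ) : ℂ) - 1‖ := by
  have hx : ‖((x j : ℂˣ) : ℂ)‖ = 1 := Complex.norm_eq_one_of_mem_rootsOfUnity (x j).2
  simp [torusCoord, ← mul_sub_one, hx]

variable [Fintype ι] [DecidableEq ι] (x : ι → rootsOfUnity N ℂ) (ζ : rootsOfUnity N ℂ)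

theorem norm_torusCoord_mul_prod_mulSingle_sub_le (t : Finset ι) :
    ‖torusCoord (x * ∏ i ∈ t, Pi.mulSingle i ζ) - torusCoord x‖ ≤ ‖((ζ : ℂˣ) : ℂ) - 1‖ := by
  refine (pi_norm_le_iff_of_nonneg (norm_nonneg _)).mpr fun j ↦ ?_
  rw [norm_torusCoord_mul_sub_apply, Finset.prod_apply, Finset.prod_pi_mulSingle]
  split_ifs <;> simp

theorem norm_sub_one_le_norm_torusCoord_mul_mulSingle_sub (j : ι) :
    ‖((ζ : ℂˣ) : ℂ) - 1‖ ≤ ‖torusCoord (x * Pi.mulSingle j ζ) - torusCoord x‖ := by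
  have hj := norm_le_pi_norm (torusCoord (x * Pi.mulSingle j ζ) - torusCoord x) j
  rwa [norm_torusCoord_mul_sub_apply, Pi.mulSingle_eq_same] at hj

end Torus

theorem inv_toReal_lt_half_of_two_lt {p : ℝ≥0∞} (hp : 2 < p) : p.toReal⁻¹ < 1 / 2 := by
  rcases eq_or_ne p ∞ with rfl | hp_top
  · simp
  · rw [one_div]
    gcongr
    simpa using (ENNReal.toReal_lt_toReal ENNReal.ofNat_ne_top hp_top).mpr hp

theorem tendsto_natCast_div_rpow_atTop {α : ℝ} (hα : α < 1 / 2) :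
    Tendsto (fun m : ℕ ↦ (m : ℝ) / ((m : ℝ) ^ 2 * 2) ^ α) atTop atTop := by
  have hpow : Tendsto (fun m : ℕ ↦ (m : ℝ) ^ (1 - 2 * α) / 2 ^ α) atTop atTop :=
    ((tendsto_rpow_atTop (by linarith)).comp tendsto_natCast_atTop_atTop).atTop_div_const
      (by positivity)
  refine hpow.congr' ?_
  filter_upwards [eventually_gt_atTop 0] with m hm
  have hm' : (0 : ℝ) < m := by exact_mod_cast hm
  rw [Real.mul_rpow (by positivity) (by positivity), ← Real.rpow_natCast_mul hm'.le,
    Real.rpow_sub hm', Real.rpow_one, div_div]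
  norm_num

theorem exists_torus_map_piLp {p : ℝ≥0∞} [Fact (1 ≤ p)] (hp : 2 < p) {δ : ℝ} (hδ : 0 < δ)
    (R : ℝ) :
    ∃ m > 0, ∃ (ζ : rootsOfUnity (2 * m) ℂ) (d : ℕ)
      (Φ : (Fin (m ^ 2) → rootsOfUnity (2 * m) ℂ) → PiLp p (fun _ : Fin d ↦ ℝ)),
      (∀ x t, dist (Φ (x * ∏ i ∈ t, Pi.mulSingle i ζ)) (Φ x) ≤ δ) ∧
      ∀ x j, R ≤ dist (Φ (x * Pi.mulSingle j ζ ^ m)) (Φ x) := by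
  have hscale := (tendsto_natCast_div_rpow_atTop (inv_toReal_lt_half_of_two_lt hp)).const_mul_atTop
    (div_pos hδ Real.pi_pos)
  obtain ⟨m, hRm, hm⟩ := ((hscale.eventually_ge_atTop R).and (eventually_gt_atTop 0)).exists
  have : (0 : ℝ) < m := by exact_mod_cast hm
  have : NeZero (2 * m) := ⟨by positivity⟩
  obtain ⟨ζ, hζ, hζm⟩ := exists_rootsOfUnity_norm_sub_one_le hm
  set D : ℝ := ((m : ℝ) ^ 2 * 2) ^ p.toReal⁻¹
  have hD : 0 < D := by positivity
  set r : ℝ := δ / Real.pi * (m / D)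
  have hr : 0 < r := by positivity
  have hdist : ∀ x y : Fin (m ^ 2) → rootsOfUnity (2 * m) ℂ,
      dist (r • realCoordinates p (m ^ 2) (torusCoord x))
        (r • realCoordinates p (m ^ 2) (torusCoord y)) =
      r * ‖realCoordinates p (m ^ 2) (torusCoord x - torusCoord y)‖ := fun x y ↦ by
    rw [dist_smul₀, dist_eq_norm, map_sub, Real.norm_of_nonneg hr.le]
  refine ⟨m, hm, ζ, m ^ 2 * 2, fun x ↦ r • realCoordinates p (m ^ 2) (torusCoord x),
    fun x t ↦ ?_, fun x j ↦ ?_⟩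
  · rw [hdist]
    calc r * ‖realCoordinates p (m ^ 2) _‖ ≤ r * (D * (Real.pi / m)) := by
          gcongr
          refine (norm_realCoordinates_le p _).trans ?_
          push_cast
          gcongr
          exact (norm_torusCoord_mul_prod_mulSingle_sub_le x ζ t).trans hζ
      _ = δ := by simp only [r]; field_simp
  · have hfar := (norm_sub_one_le_norm_torusCoord_mul_mulSingle_sub x (ζ ^ m) j).trans
      (norm_le_two_mul_norm_realCoordinates p _)
    have htwo : ‖(((ζ ^ m : rootsOfUnity (2 * m) ℂ) : ℂˣ) : ℂ) - 1‖ = 2 := by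
      push_cast
      rw [hζm]
      norm_num
    rw [htwo] at hfar
    rw [hdist, ← Pi.mulSingle_pow]
    nlinarith

theorem no_uniform_finite_embeddings_of_lp_subsets_general {H : Type*}
    [NormedAddCommGroup H] [InnerProductSpace ℝ H] {p : ℝ≥0∞} [Fact (1 ≤ p)] (hp : 2 < p) :
    ¬ ∃ ρminus ρplus : ℝ≥0 → ℝ≥0,
      IsBoundedUnder (· ≤ ·) (𝓝 0) ρplus ∧ Tendsto ρminus atTop atTop ∧
      ∀ (d : ℕ) (A : Finset (PiLp p (fun _ : Fin d ↦ ℝ))),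
        ∃ fA : PiLp p (fun _ : Fin d ↦ ℝ) → H, ∀ x ∈ A, ∀ y ∈ A,
          ρminus (nndist x y) ≤ nndist (fA x) (fA y) ∧
          nndist (fA x) (fA y) ≤ ρplus (nndist x y) := by
  rintro ⟨ρminus, ρplus, ⟨K, hK⟩, hminus, hemb⟩
  obtain ⟨δ, hδ, hKδ⟩ := Metric.eventually_nhds_iff.mp (eventually_map.mp hK)
  obtain ⟨R, hR⟩ := eventually_atTop.mp (hminus.eventually_ge_atTop (4 * K + 1))
  obtain ⟨m, hm, ζ, d, Φ, hnear, hfar⟩ := exists_torus_map_piLp hp (half_pos hδ) R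
  have : NeZero (2 * m) := ⟨by positivity⟩
  obtain ⟨f, hf⟩ := hemb d (Set.finite_range Φ).toFinset
  simp only [Set.Finite.mem_toFinset, Set.forall_mem_range] at hf
  have hcotype : (Finset.univ : Finset (Fin (m ^ 2))).card * ((4 * K + 1 : ℝ) - 2 * K) ^ 2 ≤
      4 * m ^ 2 * (K : ℝ) ^ 2 := by
    refine card_mul_sq_le_of_displacement (g := f ∘ Φ) (e := fun j ↦ Pi.mulSingle j ζ)
      (by linarith [K.coe_nonneg]) (fun x t _ ↦ ?_) (fun x j _ ↦ ?_)
    · have hball : dist (nndist (Φ (x * ∏ i ∈ t, Pi.mulSingle i ζ)) (Φ x)) 0 < δ := by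
        rw [NNReal.dist_eq, NNReal.coe_zero, sub_zero, coe_nndist, abs_of_nonneg dist_nonneg]
        exact (hnear x t).trans_lt (half_lt_self hδ)
      rw [← dist_eq_norm]
      exact_mod_cast (hf _ x).2.trans (hKδ hball)
    · rw [← dist_eq_norm]
      exact_mod_cast (hR _ (hfar x j)).trans (hf _ x).1
  have hm' : (0 : ℝ) < m ^ 2 := by positivity
  rw [Finset.card_univ, Fintype.card_fin] at hcotype
  push_cast at hcotype
  have hsq : (4 * K + 1 - 2 * K : ℝ) ^ 2 ≤ (2 * K) ^ 2 :=
    le_of_mul_le_mul_left (by linarith) hm'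
  linarith [K.coe_nonneg]

/-- For `2 < p < ∞`, the finite subsets of the spaces `(ℝ^d, ‖·‖_p)`, taken over all
dimensions `d`, cannot be mapped into the Hilbert space `ℓ²` with uniform distortion
functions `ρ₋, ρ₊ : [0,∞) → [0,∞)` (non-decreasing, with `ρ₋(t) → ∞`). -/
theorem no_uniform_finite_embeddings_of_lp_subsets (p : ℝ) (hp : 2 < p) :
    haveI : Fact (1 ≤ ENNReal.ofReal p) := ⟨ENNReal.one_le_ofReal.mpr (by linarith)⟩
    ¬ ∃ ρminus ρplus : ℝ≥0 → ℝ≥0,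
      Monotone ρminus ∧ Monotone ρplus ∧
      Tendsto ρminus atTop atTop ∧
      ∀ (d : ℕ) (A : Finset (PiLp (ENNReal.ofReal p) (fun _ : Fin d => ℝ))),
        ∃ fA : PiLp (ENNReal.ofReal p) (fun _ : Fin d => ℝ) → lp (fun _ : ℕ => ℝ) 2,
          ∀ x ∈ A, ∀ y ∈ A,
            ρminus (nndist x y) ≤ nndist (fA x) (fA y) ∧
            nndist (fA x) (fA y) ≤ ρplus (nndist x y) := by
  have : Fact (1 ≤ ENNReal.ofReal p) := ⟨ENNReal.one_le_ofReal.mpr (by linarith)⟩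
  rintro ⟨ρminus, ρplus, -, hplus, hminus, hemb⟩
  exact no_uniform_finite_embeddings_of_lp_subsets_general
    ((ENNReal.lt_ofReal_iff_toReal_lt ENNReal.ofNat_ne_top).mpr hp)
    ⟨ρminus, ρplus, ⟨ρplus 1, (eventually_le_nhds one_pos).mono fun _ ht ↦ hplus ht⟩, hminus, hemb⟩
end
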